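/- arXiv:2510.01811 — 2 statements merged into one kernel-verified Lean document; each statement's English description precedes it below -/
import Mathlib

section
/- Let F_q be a finite field, let m ≥ 1, let r be a positive integer, let I ⊆ ℤ_{≥0}^{m+1} be a finite set, and let (p_1, y_1), …, (p_n, y_n) be points of F_q^m × F_q. If |I| > C(m+r, m+1)·n, where C(m+r, m+1) is the binomial coefficient, then there exists a nonzero polynomial Q ∈ F_q[X_1,…,X_m,Y] whose support is contained in I and which has a zero of multiplicity at least r at (p_j, y_j) for every 1 ≤ j ≤ n. -/
/-- The translate `F(X + p)` of a multivariate polynomial `F` by a point `p`. -/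
noncomputable def polyTranslate {K : Type*} [CommRing K] {σ : Type*}
    (F : MvPolynomial σ K) (p : σ → K) : MvPolynomial σ K :=
  MvPolynomial.aeval (fun i => MvPolynomial.X i + MvPolynomial.C (p i)) F

/-- `F` has a zero of multiplicity at least `r` at `p` if every monomial of total degree `< r`
in the translated polynomial `F(X + p)` has zero coefficient. -/
def HasZeroOfMultAtLeast {K : Type*} [CommRing K] {σ : Type*}
    (F : MvPolynomial σ K) (p : σ → K) (r : ℕ) : Prop :=
  ∀ u ∈ (polyTranslate F p).support, r ≤ u.sum fun _ e => e

def lowExps (k r : ℕ) : Finset (Fin k →₀ ℕ) :=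
  (Finset.range r).biUnion fun d => Finset.finsuppAntidiag Finset.univ d

theorem mem_lowExps {k r : ℕ} (u : Fin k →₀ ℕ) (h : (u.sum fun _ e => e) < r) :
    u ∈ lowExps k r := by
  rw [Finsupp.sum_fintype _ _ (fun _ => rfl)] at h
  simp only [lowExps, Finset.mem_biUnion, Finset.mem_range, Finset.mem_finsuppAntidiag]
  exact ⟨_, h, rfl, Finset.subset_univ _⟩

theorem card_lowExps (m r : ℕ) : (lowExps (m + 1) r).card ≤ (m + r).choose (m + 1) := by
  refine Finset.card_biUnion_le.trans ?_
  induction r with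
  | zero => simp
  | succ r ih =>
    rw [Finset.sum_range_succ, Finset.card_finsuppAntidiag_nat_eq_choose, ← add_assoc,
      Nat.choose_succ_succ, add_comm]
    refine add_le_add (le_of_eq ?_) ih
    rw [Finset.card_univ, Fintype.card_fin, show m + 1 + r - 1 = m + r by omega]
    exact (Nat.choose_symm_add).symm

/-- Let `F_q` be a finite field, `m ≥ 1`, `r ≥ 1`, `I ⊆ ℤ_{≥0}^{m+1}` finite, and
`(p_1, y_1), …, (p_n, y_n)` points of `F_q^m × F_q`.  If `|I| > C(m+r, m+1)·n` then there
exists a nonzero `Q ∈ F_q[X_1,…,X_m,Y]` with support contained in `I` having a zero of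
multiplicity at least `r` at each `(p_j, y_j)`. -/
theorem exists_nonzero_interpolating_poly_with_multiplicity
    (Fq : Type*) [Field Fq] [Fintype Fq]
    (m : ℕ) (hm : 1 ≤ m) (r : ℕ) (hr : 1 ≤ r)
    (I : Finset (Fin (m + 1) →₀ ℕ))
    (n : ℕ) (p : Fin n → (Fin m → Fq)) (y : Fin n → Fq)
    (hI : Nat.choose (m + r) (m + 1) * n < I.card) :
    ∃ Q : MvPolynomial (Fin (m + 1)) Fq, Q ≠ 0 ∧ (Q.support : Set (Fin (m + 1) →₀ ℕ)) ⊆ I ∧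
      ∀ j : Fin n, HasZeroOfMultAtLeast Q (Fin.snoc (p j) (y j)) r := by
  let T : Fin n → MvPolynomial (Fin (m + 1)) Fq →ₗ[Fq] MvPolynomial (Fin (m + 1)) Fq := fun j =>
    (MvPolynomial.aeval (fun i => MvPolynomial.X i +
      MvPolynomial.C ((Fin.snoc (p j) (y j) : Fin (m + 1) → Fq) i))).toLinearMap
  let P : (I → Fq) →ₗ[Fq] MvPolynomial (Fin (m + 1)) Fq :=
    ∑ i : I, (MvPolynomial.monomial i.1).comp (LinearMap.proj i)
  let L : (I → Fq) →ₗ[Fq] (Fin n × lowExps (m + 1) r → Fq) :=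
    LinearMap.pi fun x => (MvPolynomial.lcoeff Fq x.2.1).comp ((T x.1).comp P)
  have hP : ∀ c v, MvPolynomial.coeff v (P c) = if h : v ∈ I then c ⟨v, h⟩ else 0 := by
    intro c v
    simp only [P, LinearMap.sum_apply, LinearMap.comp_apply, LinearMap.proj_apply,
      MvPolynomial.coeff_sum, MvPolynomial.coeff_monomial]
    split_ifs with h
    · rw [Finset.sum_eq_single ⟨v, h⟩]
      · simp
      · intro b _ hb
        exact if_neg fun h' => hb (Subtype.ext h')
      · simp
    · refine Finset.sum_eq_zero fun b _ => if_neg ?_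
      rintro rfl
      exact h b.2
  have hk : LinearMap.ker L ≠ ⊥ := by
    apply LinearMap.ker_ne_bot_of_finrank_lt
    simp only [Module.finrank_fintype_fun_eq_card, Fintype.card_prod, Fintype.card_fin,
      Fintype.card_coe]
    calc _ ≤ n * (m + r).choose (m + 1) := Nat.mul_le_mul_left _ (card_lowExps m r)
      _ < _ := by rwa [mul_comm]
  obtain ⟨c, hc, hc0⟩ := (Submodule.ne_bot_iff _).1 hk
  refine ⟨P c, ?_, ?_, ?_⟩
  · intro h0
    apply hc0
    ext i
    have := hP c i.1
    rw [h0] at this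
    simpa using this.symm
  · intro v hv
    by_contra h
    have h' : v ∉ I := h
    have := hP c v
    rw [dif_neg h'] at this
    exact (MvPolynomial.mem_support_iff.1 hv) this
  · intro j u hu
    by_contra! h
    apply MvPolynomial.mem_support_iff.1 hu
    exact congrFun (LinearMap.mem_ker.1 hc) (j, ⟨u, mem_lowExps u h⟩)
end

section
/- Let K be a field, let m ≥ 1 and r ≥ 1 be integers, let Q ∈ K[X_1,…,X_m,Y], let f ∈ K[X_1,…,X_m], and let p ∈ K^m. If Q has a zero of multiplicity at least r at the point (p, f(p)) ∈ K^m × K, then the polynomial F(X_1,…,X_m) = Q(X_1,…,X_m, f(X_1,…,X_m)) has a zero of multiplicity at least r at p (i.e., every monomial of total degree < r in F(X + p) has zero coefficient). -/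
open MvPolynomial in
theorem hasZero_iff_aux {K : Type*} [CommRing K] {σ : Type*}
    (F : MvPolynomial σ K) (p : σ → K) (r : ℕ) :
    HasZeroOfMultAtLeast F p r ↔ polyTranslate F p ∈ idealOfVars σ K ^ r := by
  rw [mem_pow_idealOfVars_iff]
  rfl

open MvPolynomial in
theorem translate_sub_mem_aux {K : Type*} [CommRing K] {σ : Type*}
    (f : MvPolynomial σ K) (p : σ → K) :
    polyTranslate f p - C (eval p f) ∈ idealOfVars σ K := by
  have h : constantCoeff (polyTranslate f p) = eval p f := by
    have : (constantCoeff (R := K) (σ := σ)).comp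
        ((aeval (fun i => X i + C (p i)) : MvPolynomial σ K →ₐ[K] MvPolynomial σ K) :
          MvPolynomial σ K →+* MvPolynomial σ K) = eval p := by
      apply MvPolynomial.ringHom_ext <;> intro i <;> simp
    exact congrArg (fun g => g f) this
  rw [← pow_one (idealOfVars σ K), mem_pow_idealOfVars_iff']
  intro x hx
  have hx0 : x = 0 := by
    rw [← Finsupp.degree_eq_zero_iff]; omega
  subst hx0
  have : constantCoeff (polyTranslate f p - C (eval p f)) = 0 := by
    rw [map_sub, h]; simp
  exact this

/-- Let `K` be a field, `m, r ≥ 1`, `Q ∈ K[X_1,…,X_m,Y]`, `f ∈ K[X_1,…,X_m]`, `p ∈ K^m`.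
If `Q` has a zero of multiplicity at least `r` at `(p, f(p))` then
`F(X) = Q(X, f(X))` has a zero of multiplicity at least `r` at `p`. -/
theorem multiplicity_of_substitution
    (K : Type*) [Field K]
    (m : ℕ) (hm : 1 ≤ m) (r : ℕ) (hr : 1 ≤ r)
    (Q : MvPolynomial (Fin (m + 1)) K) (f : MvPolynomial (Fin m) K) (p : Fin m → K)
    (hQ : HasZeroOfMultAtLeast Q (Fin.snoc p (MvPolynomial.eval p f)) r) :
    HasZeroOfMultAtLeast (MvPolynomial.aeval (Fin.snoc MvPolynomial.X f) Q) p r := by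
  rw [hasZero_iff_aux] at hQ ⊢
  let g : Fin (m + 1) → MvPolynomial (Fin m) K :=
    Fin.snoc (α := fun _ => MvPolynomial (Fin m) K) MvPolynomial.X
      (polyTranslate f p - MvPolynomial.C (MvPolynomial.eval p f))
  have key : polyTranslate (MvPolynomial.aeval (Fin.snoc MvPolynomial.X f) Q) p
      = MvPolynomial.aeval g (polyTranslate Q (Fin.snoc p (MvPolynomial.eval p f))) := by
    unfold polyTranslate
    rw [← AlgHom.comp_apply, ← AlgHom.comp_apply]
    congr 1
    apply MvPolynomial.algHom_ext
    intro i
    refine Fin.lastCases ?_ (fun j => ?_) i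
    · simp [g, polyTranslate, MvPolynomial.algebraMap_eq]
    · simp [g, MvPolynomial.algebraMap_eq]
  rw [key]
  have hle : (MvPolynomial.idealOfVars (Fin (m + 1)) K).map (MvPolynomial.aeval g)
      ≤ MvPolynomial.idealOfVars (Fin m) K := by
    rw [MvPolynomial.idealOfVars, Ideal.map_span, Ideal.span_le]
    rintro _ ⟨_, ⟨i, rfl⟩, rfl⟩
    refine Fin.lastCases ?_ (fun j => ?_) i
    · simpa [g] using translate_sub_mem_aux f p
    · have hj : (MvPolynomial.X j : MvPolynomial (Fin m) K) ∈
          MvPolynomial.idealOfVars (Fin m) K := Ideal.subset_span ⟨j, rfl⟩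
      simpa [g] using hj
  have h2 := Ideal.mem_map_of_mem (MvPolynomial.aeval g) hQ
  rw [Ideal.map_pow] at h2
  exact Ideal.pow_right_mono hle r h2
end
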